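/- Let n = q_k. For all x, y in the circle and every index 0 ≤ i ≤ q_k − 1, the ordered eigenvalues of the periodic restriction satisfy |μ̃_i(x) − μ̃_i(y)| ≤ λγ₊C₊/q_{k+1} + 2λγ₊C₊/q_k ≤ 3λγ₊C₊/q_k. -/

import Mathlib

/-!
The distribution function `h` of `ν` conjugates `T` to the rotation by `α` and satisfies
`v - u ≤ C₊ (h v - h u)` for `u ≤ v`. The jumps of `f` are downwards, so `f v - f u ≤ γ₊ (v - u)`
for all `u ≤ v`. Hence moving a point to the right by `ν`-measure `c` raises the potential `λ f`
by at most `λ γ₊ C₊ c`. By Weyl's inequality, a one-sided bound on the change of the potential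
bounds the change of every ordered eigenvalue on the same side; exchanging `x` and `y` gives the
absolute value.

It remains to match the orbits. Let `n = q k`, `p / n` the convergent of `α` and
`ε = 1 / q (k + 1)`, so that `|n α - p| ≤ ε`. Replacing the potential of `x` by a cyclic shift of
it does not change the spectrum of the periodic matrix. As `p` is coprime to `n`, some shift `j`
has `j p ≡ ⌊n (s - ε)⌋ mod n` with `s = h y - h x`; then every `T ^ l y` lies to the right of its
partner `T ^ ((l + j) mod n) x` at `ν`-distance at most `2 ε + 1 / n`, because the rotation by `α`
differs from the rotation by `p / n` by at most `ε` over `n` steps.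
-/

open MeasureTheory Polynomial Filter

noncomputable section

attribute [local instance] Matrix.normedAddCommGroup

/-- Dirichlet restriction `H_n(x)` of the Schrödinger operator with potential
`n ↦ λ f (T^n x)` to `[0, n-1]`: tridiagonal with diagonal `λ f (T^j x)` and `1`
on the two off-diagonals. -/
def HDir (lam : ℝ) (f : ℝ → ℝ) (T : Equiv.Perm ℝ) (x : ℝ) (n : ℕ) :
    Matrix (Fin n) (Fin n) ℝ :=
  Matrix.of fun i j : Fin n =>
    (if i = j then lam * f ((T ^ (i : ℕ)) x) else 0) +
    (if (i : ℕ) + 1 = (j : ℕ) ∨ (j : ℕ) + 1 = (i : ℕ) then 1 else 0)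

/-- Periodic restriction `H̃_n(x)`: the Dirichlet restriction with additional
entries `1` in the corners `(0, n-1)` and `(n-1, 0)`. -/
def HPer (lam : ℝ) (f : ℝ → ℝ) (T : Equiv.Perm ℝ) (x : ℝ) (n : ℕ) :
    Matrix (Fin n) (Fin n) ℝ :=
  HDir lam f T x n +
    Matrix.of (fun i j : Fin n =>
      if ((i : ℕ) = 0 ∧ (j : ℕ) = n - 1) ∨ ((i : ℕ) = n - 1 ∧ (j : ℕ) = 0) then (1 : ℝ) else 0)

/-- `P_n(x,E) = det (H_n(x) - E)`. -/
def Pdet (lam : ℝ) (f : ℝ → ℝ) (T : Equiv.Perm ℝ) (x E : ℝ) (n : ℕ) : ℝ :=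
  (HDir lam f T x n - E • (1 : Matrix (Fin n) (Fin n) ℝ)).det

/-- `P_n(x,E)` with integer index, with the conventions `P_0 = 1` and `P_n = 0` for `n < 0`. -/
def PdetI (lam : ℝ) (f : ℝ → ℝ) (T : Equiv.Perm ℝ) (x E : ℝ) (n : ℤ) : ℝ :=
  if 0 ≤ n then Pdet lam f T x E n.toNat else 0

/-- `P̃_n(x,E) = det (H̃_n(x) - E)`. -/
def PtildeDet (lam : ℝ) (f : ℝ → ℝ) (T : Equiv.Perm ℝ) (x E : ℝ) (n : ℕ) : ℝ :=
  (HPer lam f T x n - E • (1 : Matrix (Fin n) (Fin n) ℝ)).det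

/-- One-step transfer matrix `A_i(x,E)`. -/
def transferA (lam : ℝ) (f : ℝ → ℝ) (T : Equiv.Perm ℝ) (E x : ℝ) (i : ℕ) :
    Matrix (Fin 2) (Fin 2) ℝ :=
  !![E - lam * f ((T ^ i) x), -1; 1, 0]

/-- `n`-step transfer matrix `M_n(x,E) = A_{n-1} ⋯ A_0`. -/
def transferM (lam : ℝ) (f : ℝ → ℝ) (T : Equiv.Perm ℝ) (E x : ℝ) :
    ℕ → Matrix (Fin 2) (Fin 2) ℝ
  | 0 => 1
  | m + 1 => transferA lam f T E x m * transferM lam f T E x m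

/-- Dirichlet restriction `H_{[a, a+m-1]}(x)` of the operator to the integer
interval starting at `a : ℤ` of length `m`. -/
def HBox (lam : ℝ) (f : ℝ → ℝ) (T : Equiv.Perm ℝ) (x : ℝ) (a : ℤ) (m : ℕ) :
    Matrix (Fin m) (Fin m) ℝ :=
  Matrix.of fun i j : Fin m =>
    (if i = j then lam * f ((T ^ (a + ((i : ℕ) : ℤ))) x) else 0) +
    (if (i : ℕ) + 1 = (j : ℕ) ∨ (j : ℕ) + 1 = (i : ℕ) then 1 else 0)

/-- Green function `G_{x,E,[a,a+m-1]} = (H_{[a,a+m-1]}(x) - E)⁻¹`. -/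
def GBox (lam : ℝ) (f : ℝ → ℝ) (T : Equiv.Perm ℝ) (x E : ℝ) (a : ℤ) (m : ℕ) :
    Matrix (Fin m) (Fin m) ℝ :=
  (HBox lam f T x a m - E • (1 : Matrix (Fin m) (Fin m) ℝ))⁻¹

/-- A point `n : ℤ` is `(x, c, qk)`-regular: there is an interval `[a, b]` of length
`qk` (`b = a + qk - 1`) containing `n` with `|n - a| ≥ qk/5`, `|n - b| ≥ qk/5` and
`|G(a,n)| ≤ e^{-c|n-a|}`, `|G(n,b)| ≤ e^{-c|n-b|}`. -/
def RegularPt (lam : ℝ) (f : ℝ → ℝ) (T : Equiv.Perm ℝ) (x E c : ℝ) (qk : ℕ) (n : ℤ) : Prop :=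
  ∃ (a : ℤ) (i0 i j : Fin qk),
    (i0 : ℕ) = 0 ∧ (j : ℕ) = qk - 1 ∧ n = a + ((i : ℕ) : ℤ) ∧
    (qk : ℝ) / 5 ≤ ((i : ℕ) : ℝ) ∧ (qk : ℝ) / 5 ≤ ((j : ℕ) : ℝ) - ((i : ℕ) : ℝ) ∧
    |GBox lam f T x E a qk i0 i| ≤ Real.exp (-c * ((i : ℕ) : ℝ)) ∧
    |GBox lam f T x E a qk i j| ≤ Real.exp (-c * (((j : ℕ) : ℝ) - ((i : ℕ) : ℝ)))

/-- The `ν`-measure of the positively oriented arc of the circle `ℝ/ℤ` from `u` to `v`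
(computed for a `1`-periodic measure `ν` on `ℝ`). -/
def arcMeasure (ν : Measure ℝ) (u v : ℝ) : ℝ :=
  (ν (Set.Icc u (u + Int.fract (v - u)))).toReal

/-- The `ν`-measure of the smaller of the two complementary arcs between `u` and `v`. -/
def arcDist (ν : Measure ℝ) (u v : ℝ) : ℝ :=
  min (arcMeasure ν u v) (arcMeasure ν v u)

/-- The measure of the gap of the orbit point `T^j x` in the partition of the circle
by `x, Tx, …, T^{qk-1}x`: the measure of the positively oriented arc from `T^j x` to the
closest (in the positive direction) other orbit point. -/
def gapMeas (ν : Measure ℝ) (T : Equiv.Perm ℝ) (x : ℝ) (qk : ℕ) (j : ℕ) : ℝ :=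
  sInf ((fun j' : ℕ => arcMeasure ν ((T ^ j) x) ((T ^ j') x)) '' {j' | j' < qk ∧ j' ≠ j})

/-- `β(α) = limsup_k (ln q_{k+1}) / q_k` computed from the sequence of
continued-fraction denominators. -/
def cfBeta (q : ℕ → ℕ) : ℝ :=
  Filter.limsup (fun k : ℕ => Real.log (q (k + 1) : ℝ) / (q k : ℝ)) Filter.atTop

/-! ### Weyl's inequality -/

section Weyl

variable {𝕜 E : Type*} [RCLike 𝕜] [NormedAddCommGroup E] [InnerProductSpace 𝕜 E]
  [FiniteDimensional 𝕜 E] {S T : E →ₗ[𝕜] E} {n : ℕ}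

theorem exists_ne_zero_forall_inner_eq_zero {ι : Type*} [Fintype ι] (w : ι → E)
    (hw : Fintype.card ι < Module.finrank 𝕜 E) : ∃ v ≠ 0, ∀ j, inner 𝕜 (w j) v = 0 := by
  let Φ : E →ₗ[𝕜] ι → 𝕜 := LinearMap.pi fun j => (innerSL 𝕜 (w j)).toLinearMap
  have hker : Φ.ker ≠ ⊥ := LinearMap.ker_ne_bot_of_finrank_lt (by simpa using hw)
  obtain ⟨v, hv, hv0⟩ := (Submodule.ne_bot_iff _).1 hker
  exact ⟨v, hv0, fun j => congrFun hv j⟩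

theorem re_inner_apply_self_eq_sum_eigenvalues (hT : T.IsSymmetric)
    (hn : Module.finrank 𝕜 E = n) (v : E) :
    RCLike.re (inner 𝕜 v (T v)) =
      ∑ j, hT.eigenvalues hn j * ‖inner 𝕜 (hT.eigenvectorBasis hn j) v‖ ^ 2 := by
  rw [← (hT.eigenvectorBasis hn).sum_inner_mul_inner v (T v), map_sum]
  refine Finset.sum_congr rfl fun j _ => ?_
  rw [← hT, hT.apply_eigenvectorBasis, inner_smul_left, RCLike.conj_ofReal, mul_left_comm,
    RCLike.re_ofReal_mul, inner_mul_symm_re_eq_norm, norm_mul, norm_inner_symm, sq]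

theorem re_inner_apply_self_le_eigenvalue (hT : T.IsSymmetric) (hn : Module.finrank 𝕜 E = n)
    {v : E} {i : Fin n} (hv : ∀ j < i, inner 𝕜 (hT.eigenvectorBasis hn j) v = 0) :
    RCLike.re (inner 𝕜 v (T v)) ≤ hT.eigenvalues hn i * ‖v‖ ^ 2 := by
  rw [re_inner_apply_self_eq_sum_eigenvalues hT hn,
    ← (hT.eigenvectorBasis hn).sum_sq_norm_inner_right, Finset.mul_sum]
  refine Finset.sum_le_sum fun j _ => ?_
  rcases lt_or_ge j i with hji | hij
  · simp [hv j hji]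
  · gcongr
    exact hT.eigenvalues_antitone hn hij

theorem eigenvalue_le_re_inner_apply_self (hT : T.IsSymmetric) (hn : Module.finrank 𝕜 E = n)
    {v : E} {i : Fin n} (hv : ∀ j > i, inner 𝕜 (hT.eigenvectorBasis hn j) v = 0) :
    hT.eigenvalues hn i * ‖v‖ ^ 2 ≤ RCLike.re (inner 𝕜 v (T v)) := by
  rw [re_inner_apply_self_eq_sum_eigenvalues hT hn,
    ← (hT.eigenvectorBasis hn).sum_sq_norm_inner_right, Finset.mul_sum]
  refine Finset.sum_le_sum fun j _ => ?_
  rcases lt_or_ge i j with hij | hji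
  · simp [hv j hij]
  · gcongr
    exact hT.eigenvalues_antitone hn hji

theorem eigenvalues_le_eigenvalues_add (hS : S.IsSymmetric) (hT : T.IsSymmetric)
    (hn : Module.finrank 𝕜 E = n) {c : ℝ}
    (hST : ∀ v, RCLike.re (inner 𝕜 v (T v)) ≤ RCLike.re (inner 𝕜 v (S v)) + c * ‖v‖ ^ 2)
    (i : Fin n) : hT.eigenvalues hn i ≤ hS.eigenvalues hn i + c := by
  -- `v` is a test vector in the sense of Courant-Fischer for both operators at once.
  obtain ⟨v, hv0, hv⟩ := exists_ne_zero_forall_inner_eq_zero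
    (fun j : {j // j ≠ i} =>
      if j.1 < i then hS.eigenvectorBasis hn j else hT.eigenvectorBasis hn j) (by
      rw [hn, Fintype.card_subtype_compl, Fintype.card_fin, Fintype.card_unique]
      exact Nat.sub_lt i.pos one_pos)
  have hSv : ∀ j < i, inner 𝕜 (hS.eigenvectorBasis hn j) v = 0 := fun j hj => by
    simpa [hj] using hv ⟨j, hj.ne⟩
  have hTv : ∀ j > i, inner 𝕜 (hT.eigenvectorBasis hn j) v = 0 := fun j hj => by
    simpa [hj.not_gt] using hv ⟨j, hj.ne'⟩
  refine le_of_mul_le_mul_right (a := ‖v‖ ^ 2) ?_ (by positivity)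
  calc hT.eigenvalues hn i * ‖v‖ ^ 2 ≤ RCLike.re (inner 𝕜 v (T v)) :=
        eigenvalue_le_re_inner_apply_self hT hn hTv
    _ ≤ RCLike.re (inner 𝕜 v (S v)) + c * ‖v‖ ^ 2 := hST v
    _ ≤ hS.eigenvalues hn i * ‖v‖ ^ 2 + c * ‖v‖ ^ 2 := by
        gcongr
        exact re_inner_apply_self_le_eigenvalue hS hn hSv
    _ = (hS.eigenvalues hn i + c) * ‖v‖ ^ 2 := by ring

end Weyl

theorem eq_of_monotone_of_prod_X_sub_C_eq {R : Type*} [CommRing R] [IsDomain R] [LinearOrder R]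
    {n : ℕ} {a b : Fin n → R} (ha : Monotone a) (hb : Monotone b)
    (hab : ∏ i, (X - C (a i)) = ∏ i, (X - C (b i))) : a = b := by
  have hroots (c : Fin n → R) : (∏ i, (X - C (c i))).roots = ↑(List.ofFn c) := by
    rw [Polynomial.roots_prod _ _ (Finset.prod_ne_zero_iff.2 fun i _ => X_sub_C_ne_zero (c i))]
    simp [Multiset.bind_singleton, Fin.univ_val_map]
  have hperm : (List.ofFn a).Perm (List.ofFn b) := by
    rw [← Multiset.coe_eq_coe, ← hroots, ← hroots, hab]
  exact List.ofFn_injective (hperm.eq_of_sortedLE ha.sortedLE_ofFn hb.sortedLE_ofFn)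

section Matrix

variable {n : ℕ} {A B : Matrix (Fin n) (Fin n) ℝ} {a b : Fin n → ℝ}

theorem eigenvalues_rev_eq_of_charpoly_eq_prod (hA : A.toEuclideanLin.IsSymmetric)
    (ha : Monotone a) (hchar : A.charpoly = ∏ i, (X - C (a i))) (i : Fin n) :
    hA.eigenvalues finrank_euclideanSpace_fin i.rev = a i := by
  have hmono : Monotone fun i : Fin n => hA.eigenvalues finrank_euclideanSpace_fin i.rev :=
    (hA.eigenvalues_antitone finrank_euclideanSpace_fin).comp Fin.rev_anti
  refine congrFun (eq_of_monotone_of_prod_X_sub_C_eq hmono ha ?_) i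
  calc ∏ i : Fin n, (X - C (hA.eigenvalues finrank_euclideanSpace_fin i.rev))
      = ∏ i, (X - C (hA.eigenvalues finrank_euclideanSpace_fin i)) :=
        Equiv.prod_comp Fin.revPerm
          fun i => X - C (hA.eigenvalues finrank_euclideanSpace_fin i)
    _ = A.toEuclideanLin.charpoly := (hA.charpoly_eq finrank_euclideanSpace_fin).symm
    _ = A.charpoly := by
        rw [Matrix.toEuclideanLin, Matrix.toLpLin_eq_toLin, Matrix.charpoly_toLin]
    _ = ∏ i, (X - C (a i)) := hchar

theorem le_add_of_posSemidef_of_charpoly_eq_prod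
    (hA : A.IsHermitian) (hB : B.IsHermitian) {c : ℝ} (hAB : (A + c • 1 - B).PosSemidef)
    (ha : Monotone a) (hb : Monotone b) (hAa : A.charpoly = ∏ i, (X - C (a i)))
    (hBb : B.charpoly = ∏ i, (X - C (b i))) (i : Fin n) : b i ≤ a i + c := by
  rw [← Matrix.isSymmetric_toEuclideanLin_iff] at hA hB
  rw [← eigenvalues_rev_eq_of_charpoly_eq_prod hA ha hAa,
    ← eigenvalues_rev_eq_of_charpoly_eq_prod hB hb hBb]
  refine eigenvalues_le_eigenvalues_add hA hB _ (fun v => ?_) _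
  have hv := (Matrix.isPositive_toEuclideanLin_iff.2 hAB).re_inner_nonneg_right v
  rw [map_sub, map_add, map_smul, Matrix.toLpLin_one, LinearMap.sub_apply,
    LinearMap.add_apply, LinearMap.smul_apply, LinearMap.id_apply, inner_sub_right,
    inner_add_right, inner_smul_right, real_inner_self_eq_norm_sq] at hv
  simpa using hv

end Matrix

/-! ### Continued fraction convergents -/

section ContinuedFractions

open GenContFract (of)

variable {K : Type*} [Field K] [LinearOrder K] [FloorRing K]

theorem exists_int_contsAux_eq (v : K) (n : ℕ) :
    ∃ p q : ℤ, (of v).contsAux n = ⟨p, q⟩ := by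
  induction n using Nat.twoStepInduction with
  | zero => exact ⟨1, 0, by simp [GenContFract.contsAux]⟩
  | one => exact ⟨⌊v⌋, 1, by simp [GenContFract.contsAux]⟩
  | more n ih ih' =>
    obtain ⟨p, q, hpq⟩ := ih
    obtain ⟨p', q', hpq'⟩ := ih'
    rcases hs : (of v).s.get? n with _ | gp
    · exact ⟨p', q', by
        rw [GenContFract.contsAux_stable_step_of_terminated hs, hpq']⟩
    · obtain ⟨ha, b, hb⟩ := GenContFract.of_partNum_eq_one_and_exists_int_partDen_eq hs
      refine ⟨b * p' + p, b * q' + q, ?_⟩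
      simp [GenContFract.contsAux_recurrence hs hpq hpq', ha, hb]

theorem exists_int_nums_eq_and_dens_eq (v : K) (n : ℕ) :
    ∃ p q : ℤ, (of v).nums n = p ∧ (of v).dens n = q := by
  obtain ⟨p, q, hpq⟩ := exists_int_contsAux_eq v (n + 1)
  refine ⟨p, q, ?_, ?_⟩
  · rw [GenContFract.num_eq_conts_a, GenContFract.nth_cont_eq_succ_nth_contAux, hpq]
  · rw [GenContFract.den_eq_conts_b, GenContFract.nth_cont_eq_succ_nth_contAux, hpq]

theorem isCoprime_of_nums_eq_of_dens_eq {v : K} {n : ℕ} {p q : ℤ}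
    (hp : (of v).nums n = p) (hq : (of v).dens n = q) : IsCoprime p q := by
  induction n generalizing p q with
  | zero =>
    obtain rfl : q = 1 := by simpa [eq_comm] using hq
    exact isCoprime_one_right
  | succ n ih =>
    by_cases hterm : (of v).TerminatedAt n
    · rw [GenContFract.nums_stable_of_terminated n.le_succ hterm] at hp
      rw [GenContFract.dens_stable_of_terminated n.le_succ hterm] at hq
      exact ih hp hq
    · obtain ⟨p', q', hp', hq'⟩ := exists_int_nums_eq_and_dens_eq v n
      have hdet : (of v).nums n * (of v).dens (n + 1) - (of v).dens n * (of v).nums (n + 1) =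
          (-1) ^ (n + 1) := SimpContFract.determinant (s := SimpContFract.of v) hterm
      rw [hp, hq, hp', hq'] at hdet
      have hdet' : p' * q - q' * p = (-1) ^ (n + 1) := by exact_mod_cast hdet
      refine ⟨-(-1) ^ (n + 1) * q', (-1) ^ (n + 1) * p', ?_⟩
      have hsq : ((-1 : ℤ) ^ (n + 1)) * (-1) ^ (n + 1) = 1 := by rw [← mul_pow]; simp
      linear_combination (-1) ^ (n + 1) * hdet' + hsq

variable [IsStrictOrderedRing K]

theorem one_le_dens_of (v : K) (n : ℕ) : 1 ≤ (of v).dens n := by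
  induction n with
  | zero => simp
  | succ n ih => exact ih.trans GenContFract.of_den_mono

theorem abs_dens_mul_sub_nums_le (v : K) (n : ℕ) :
    |(of v).dens n * v - (of v).nums n| ≤ 1 / (of v).dens (n + 1) := by
  have hpos (m : ℕ) : 0 < (of v).dens m := one_pos.trans_le (one_le_dens_of v m)
  have hfactor : (of v).dens n * v - (of v).nums n = (of v).dens n * (v - (of v).convs n) := by
    rw [GenContFract.convs, mul_sub, mul_div_cancel₀ _ (hpos n).ne']
  rw [hfactor, abs_mul, abs_of_pos (hpos n)]
  by_cases hterm : (of v).TerminatedAt n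
  · rw [← GenContFract.of_correctness_of_terminatedAt hterm, sub_self, abs_zero, mul_zero]
    exact (one_div_pos.2 (hpos _)).le
  · calc (of v).dens n * |v - (of v).convs n|
        ≤ (of v).dens n * (1 / ((of v).dens n * (of v).dens (n + 1))) := by
          gcongr
          · exact (hpos n).le
          · exact GenContFract.abs_sub_convs_le hterm
      _ = 1 / (of v).dens (n + 1) := by
          have := (hpos n).ne'
          field_simp

end ContinuedFractions

/-! ### Matching two orbits of a rotation -/

theorem exists_fin_mul_modEq {n : ℕ} [NeZero n] {p : ℤ} (hp : IsCoprime p n) (r : ℤ) :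
    ∃ j : Fin n, j * p ≡ r [ZMOD n] := by
  obtain ⟨u, w, huw⟩ := hp
  have hn : (0 : ℤ) < n := by exact_mod_cast NeZero.pos n
  lift r * u % n to ℕ using Int.emod_nonneg _ hn.ne' with j hj
  have hjn : j < n := by exact_mod_cast hj ▸ Int.emod_lt_of_pos (r * u) hn
  have hju : j ≡ r * u [ZMOD n] := hj ▸ Int.mod_modEq _ _
  refine ⟨⟨j, hjn⟩, (hju.mul_right p).trans (Int.modEq_iff_dvd.2 ⟨r * w, ?_⟩)⟩
  linear_combination -r * huw

theorem exists_fin_forall_rotation_sub_mem_Icc {n : ℕ} [NeZero n] {p : ℤ} (hp : IsCoprime p n)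
    {α ε : ℝ} (hε : |n * α - p| ≤ ε) (s : ℝ) :
    ∃ j : Fin n, ∀ l : Fin n, ∃ m : ℤ,
      s + l * α - ((l + j : Fin n) * α + m) ∈ Set.Icc 0 (2 * ε + 1 / n) := by
  have hn : (0 : ℝ) < n := by exact_mod_cast NeZero.pos n
  -- The shift by `ε` keeps `n * s - r` above `n * ε`, the bound for the drift `e * (n * α - p)`.
  set r : ℤ := ⌊n * (s - ε)⌋
  obtain ⟨j, hj⟩ := exists_fin_mul_modEq hp r
  refine ⟨j, fun l => ?_⟩
  set e : ℤ := (l + j : Fin n) - l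
  have he : e * p ≡ r [ZMOD n] := by
    refine Int.ModEq.trans (Int.ModEq.mul_right p ?_) hj
    have hval : ((l + j : Fin n) : ℤ) ≡ l + j [ZMOD n] := by
      rw [Fin.val_add]
      exact_mod_cast Nat.mod_modEq _ _
    simpa [e] using hval.sub_right l
  obtain ⟨m, hm⟩ := he.dvd
  have heδ : |e * (n * α - p)| ≤ n * ε := by
    have hen : |e| ≤ n := abs_sub_le_of_nonneg_of_le (Int.natCast_nonneg _)
      (Int.ofNat_le.2 (l + j).isLt.le) (Int.natCast_nonneg _) (Int.ofNat_le.2 l.isLt.le)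
    rw [abs_mul]
    gcongr
    exact_mod_cast hen
  have hkey : n * (s + l * α - ((l + j : Fin n) * α + m)) = n * s - r - e * (n * α - p) := by
    have hm' : (r : ℝ) - e * p = n * m := by exact_mod_cast hm
    simp only [e] at hm' ⊢
    push_cast at hm' ⊢
    linear_combination hm'
  have hr : r ≤ n * (s - ε) := Int.floor_le _
  have hr' : n * (s - ε) < r + 1 := Int.lt_floor_add_one _
  rw [abs_le] at heδ
  refine ⟨m, le_of_mul_le_mul_left ?_ hn, le_of_mul_le_mul_left ?_ hn⟩
  · rw [hkey]
    linarith
  · rw [hkey, mul_add, mul_one_div_cancel hn.ne']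
    linarith

/-! ### Distribution functions of periodic measures -/

section Distribution

theorem measureReal_Ioc_apply_apply {α : Type*} [LinearOrder α] [TopologicalSpace α]
    [OrderClosedTopology α] [MeasurableSpace α] [OpensMeasurableSpace α] {ν : Measure α}
    {g : α → α} (hg : StrictMono g) (hgν : MeasurePreserving g ν ν) (a b : α) :
    ν.real (Set.Ioc (g a) (g b)) = ν.real (Set.Ioc a b) := by
  rw [← hgν.measureReal_preimage measurableSet_Ioc.nullMeasurableSet]
  congr 1
  ext t
  simp only [Set.mem_preimage, Set.mem_Ioc, hg.lt_iff_lt, hg.le_iff_le]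

variable {ν : Measure ℝ}

theorem measure_Ico_intCast (hper : MeasurePreserving (· + 1) ν ν) (m : ℤ) :
    ν (Set.Ico (m : ℝ) (m + 1)) = ν (Set.Ico 0 1) := by
  have hperiodic : Function.Periodic (fun t : ℝ => ν (Set.Ico t (t + 1))) 1 := fun t => by
    beta_reduce
    rw [← hper.measure_preimage measurableSet_Ico.nullMeasurableSet, Set.preimage_add_const_Ico]
    simp
  simpa using hperiodic.int_mul_eq m

theorem isLocallyFiniteMeasure_of_measure_Ico_ne_top (hper : MeasurePreserving (· + 1) ν ν)
    (hν : ν (Set.Ico 0 1) ≠ ⊤) : IsLocallyFiniteMeasure ν := by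
  refine ⟨fun t => ⟨Set.Ico (⌊t⌋ - 1) ⌊t⌋ ∪ Set.Ico ⌊t⌋ (⌊t⌋ + 1), ?_, ?_⟩⟩
  · rw [Set.Ico_union_Ico_eq_Ico (sub_le_self _ zero_le_one) (le_add_of_nonneg_right zero_le_one)]
    exact Ico_mem_nhds (by linarith [Int.floor_le t]) (Int.lt_floor_add_one t)
  · refine measure_union_lt_top ?_ ?_
    · have := measure_Ico_intCast hper (⌊t⌋ - 1)
      push_cast at this
      rw [sub_add_cancel] at this
      exact this ▸ hν.lt_top
    · exact measure_Ico_intCast hper ⌊t⌋ ▸ hν.lt_top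

theorem measureReal_Ioc_zero_one (hper : MeasurePreserving (· + 1) ν ν)
    (hν : ν (Set.Ico 0 1) = 1) : ν.real (Set.Ioc 0 1) = 1 := by
  have := isLocallyFiniteMeasure_of_measure_Ico_ne_top hper (hν ▸ ENNReal.one_ne_top)
  have hsingleton : ν {(1 : ℝ)} = ν {0} := by
    rw [← hper.measure_preimage (measurableSet_singleton 1).nullMeasurableSet]
    simp
  have hIcc : ν (Set.Ioc 0 1) + ν {0} = ν (Set.Ico 0 1) + ν {(1 : ℝ)} := by
    rw [← measure_union (by simp) (measurableSet_singleton _),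
      ← measure_union (by simp) (measurableSet_singleton _),
      Set.Ioc_union_left zero_le_one, Set.Ico_union_right zero_le_one]
  rw [hsingleton, ENNReal.add_left_inj measure_singleton_lt_top.ne, hν] at hIcc
  simp [measureReal_def, hIcc]

/-- `h` is a distribution function of `ν`: a primitive of `ν`, determined up to an additive
constant. -/
def IsDistributionFunction (ν : Measure ℝ) (h : ℝ → ℝ) : Prop :=
  ∀ ⦃a b⦄, a ≤ b → h b - h a = ν.real (Set.Ioc a b)

namespace IsDistributionFunction

variable {h : ℝ → ℝ}

theorem monotone (hh : IsDistributionFunction ν h) : Monotone h :=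
  fun _ _ hab => sub_nonneg.1 (hh hab ▸ measureReal_nonneg)

theorem exists_forall_apply_eq_add (hh : IsDistributionFunction ν h) {T : ℝ → ℝ}
    (hT : StrictMono T) (hTν : MeasurePreserving T ν ν) : ∃ c, ∀ t, h (T t) = h t + c := by
  have hsub {a b : ℝ} (hab : a ≤ b) : h (T b) - h (T a) = h b - h a := by
    rw [hh hab, hh (hT.monotone hab), measureReal_Ioc_apply_apply hT hTν]
  refine ⟨h (T 0) - h 0, fun t => ?_⟩
  rcases le_total 0 t with ht | ht <;> linarith [hsub ht]

theorem sub_le_mul_sub [IsLocallyFiniteMeasure ν] (hh : IsDistributionFunction ν h) {C : ℝ}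
    (hC : 0 ≤ C) (hνC : ∀ u v, u ≤ v → v ≤ u + 1 → v - u ≤ C * ν.real (Set.Icc u v)) {u v : ℝ}
    (huv : u ≤ v) (hvu : v ≤ u + 1) : v - u ≤ C * (h v - h u) := by
  -- Approximating `u` by `w > u` makes a possible atom at `u` harmless.
  rw [hh huv, sub_le_comm]
  refine le_of_forall_gt_imp_ge_of_dense fun w huw => sub_le_comm.1 ?_
  rcases le_total v w with hvw | hwv
  · exact (sub_nonpos.2 hvw).trans (by positivity)
  calc v - w ≤ C * ν.real (Set.Icc w v) := hνC w v hwv (by linarith)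
    _ ≤ C * ν.real (Set.Ioc u v) := by
      gcongr
      exact measure_Ioc_lt_top.ne

end IsDistributionFunction

theorem exists_circleDeg1Lift_isDistributionFunction [IsLocallyFiniteMeasure ν]
    (hper : MeasurePreserving (· + 1) ν ν) (hν : ν (Set.Ico 0 1) = 1) :
    ∃ h : CircleDeg1Lift, IsDistributionFunction ν h := by
  let h : ℝ → ℝ := fun t => ∫ _ in 0..t, (1 : ℝ) ∂ν
  have hh : IsDistributionFunction ν h := fun a b hab => by
    simp only [h]
    rw [intervalIntegral.integral_interval_sub_left intervalIntegrable_const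
      intervalIntegrable_const, intervalIntegral.integral_const', Set.Ioc_eq_empty_of_le hab]
    simp
  obtain ⟨c, hc⟩ := hh.exists_forall_apply_eq_add (fun _ _ hab => add_lt_add_left hab 1) hper
  obtain rfl : c = 1 := by
    have h01 := hh zero_le_one
    rw [measureReal_Ioc_zero_one hper hν] at h01
    have hc0 := hc 0
    rw [zero_add] at hc0
    linarith
  exact ⟨⟨⟨h, hh.monotone⟩, hc⟩, hh⟩

end Distribution

/-! ### Conjugacy to a rotation -/

theorem sub_le_mul_sub_of_forall_le_add_one (h : CircleDeg1Lift) {C : ℝ}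
    (hC : ∀ u v, u ≤ v → v ≤ u + 1 → v - u ≤ C * (h v - h u)) {u v : ℝ} (huv : u ≤ v) :
    v - u ≤ C * (h v - h u) := by
  have hC1 : 1 ≤ C := by
    have h01 := hC 0 1 zero_le_one (by simp)
    have h1 := h.map_add_one 0
    rw [zero_add] at h1
    simpa [h1] using h01
  have hm : 0 ≤ (⌊v - u⌋ : ℝ) := by exact_mod_cast Int.floor_nonneg.2 (sub_nonneg.2 huv)
  have hfract := hC (u + ⌊v - u⌋) v (by linarith [Int.floor_le (v - u)])
    (by linarith [Int.lt_floor_add_one (v - u)])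
  rw [h.map_add_int] at hfract
  linarith [le_mul_of_one_le_left hm hC1]

theorem translationNumber_eq_of_forall_apply_eq_add {h F : CircleDeg1Lift} {c : ℝ}
    (hc : ∀ t, h (F t) = h t + c) : F.translationNumber = c := by
  rw [← CircleDeg1Lift.translationNumber_translate c]
  exact CircleDeg1Lift.translationNumber_eq_of_semiconj (f := h) fun t => by
    rw [hc, CircleDeg1Lift.translate_apply, add_comm]

theorem exists_expanding_semiconj_translation {ν : Measure ℝ} {F : CircleDeg1Lift}
    (hF : StrictMono F) (hFν : MeasurePreserving F ν ν) (hper : MeasurePreserving (· + 1) ν ν)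
    (hν : ν (Set.Ico 0 1) = 1) {C : ℝ} (hC : 0 ≤ C)
    (hνC : ∀ u v, u ≤ v → v ≤ u + 1 → v - u ≤ C * ν.real (Set.Icc u v)) :
    ∃ h : CircleDeg1Lift, (∀ t, h (F t) = h t + F.translationNumber) ∧
      ∀ u v, u ≤ v → v - u ≤ C * (h v - h u) := by
  have := isLocallyFiniteMeasure_of_measure_Ico_ne_top hper (hν ▸ ENNReal.one_ne_top)
  obtain ⟨h, hh⟩ := exists_circleDeg1Lift_isDistributionFunction hper hν
  obtain ⟨c, hc⟩ := hh.exists_forall_apply_eq_add hF hFν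
  obtain rfl := translationNumber_eq_of_forall_apply_eq_add hc
  exact ⟨h, hc, fun u v => sub_le_mul_sub_of_forall_le_add_one h
    fun u v => hh.sub_le_mul_sub hC hνC⟩

/-! ### One-sided bounds for the potential -/

theorem sub_le_mul_sub_of_periodic {f : ℝ → ℝ} {γ : ℝ} (hγ : 0 ≤ γ) (hf : Function.Periodic f 1)
    (hf0 : ∀ t ∈ Set.Ico (0 : ℝ) 1, f 0 ≤ f t)
    (hfγ : ∀ u v, 0 ≤ u → u < v → v < 1 → f v - f u ≤ γ * (v - u)) {u v : ℝ} (huv : u ≤ v) :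
    f v - f u ≤ γ * (v - u) := by
  have hfγ' {s t : ℝ} (hs : 0 ≤ s) (hst : s ≤ t) (ht : t < 1) : f t - f s ≤ γ * (t - s) := by
    rcases hst.eq_or_lt with rfl | hst
    · simp
    · exact hfγ s t hs hst ht
  have hfract (t : ℝ) : f (Int.fract t) = f t := by
    rw [Int.fract, ← mul_one (⌊t⌋ : ℝ), hf.sub_int_mul_eq]
  have hfract_sub : Int.fract v - Int.fract u = (v - u) - (⌊v⌋ - ⌊u⌋) := by
    simp only [Int.fract]
    ring
  rw [← hfract u, ← hfract v]
  rcases (Int.floor_mono huv).eq_or_lt with hfloor | hfloor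
  · rw [hfloor, sub_self, sub_zero] at hfract_sub
    rw [← hfract_sub]
    exact hfγ' (Int.fract_nonneg u) (by linarith) (Int.fract_lt_one v)
  · have hle : Int.fract v ≤ v - u := by
      have : (⌊u⌋ : ℝ) + 1 ≤ ⌊v⌋ := by exact_mod_cast hfloor
      linarith [Int.fract_lt_one u]
    calc f (Int.fract v) - f (Int.fract u) ≤ f (Int.fract v) - f 0 := by
          gcongr
          exact hf0 _ ⟨Int.fract_nonneg u, Int.fract_lt_one u⟩
      _ ≤ γ * (Int.fract v - 0) := hfγ' le_rfl (Int.fract_nonneg v) (Int.fract_lt_one v)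
      _ ≤ γ * (v - u) := by
          rw [sub_zero]
          gcongr

theorem sub_le_mul_of_apply_sub_apply_nonneg {f : ℝ → ℝ} {h : CircleDeg1Lift} {γ C : ℝ}
    (hγ : 0 ≤ γ) (hC : 0 ≤ C) (hf : Function.Periodic f 1)
    (hfγ : ∀ u v, u ≤ v → f v - f u ≤ γ * (v - u))
    (hh : ∀ u v, u ≤ v → v - u ≤ C * (h v - h u)) {u v : ℝ} {m : ℤ}
    (huv : 0 ≤ h v - (h u + m)) : f v - f u ≤ γ * C * (h v - (h u + m)) := by
  have hfm : f (u + m) = f u := by simpa using hf.int_mul m u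
  rw [← h.map_add_int] at huv ⊢
  have hle : u + m ≤ v := by
    by_contra! hlt
    linarith [hh v (u + m) hlt.le, mul_nonneg hC huv]
  calc f v - f u ≤ γ * (v - (u + m)) := hfm ▸ hfγ _ _ hle
    _ ≤ γ * (C * (h v - h (u + m))) := by
        gcongr
        exact hh _ _ hle
    _ = γ * C * (h v - h (u + m)) := by ring

/-! ### The periodic restriction -/

theorem charpoly_diagonal_add_circulant_add_right {R G : Type*} [CommRing R] [AddGroup G]
    [Fintype G] [DecidableEq G] (d w : G → R) (g : G) :
    (Matrix.diagonal (fun i => d (i + g)) + Matrix.circulant w).charpoly =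
      (Matrix.diagonal d + Matrix.circulant w).charpoly := by
  rw [← Matrix.charpoly_reindex (Equiv.addRight g)]
  congr 1
  ext i j
  simp [Matrix.diagonal_apply, Matrix.circulant_apply]

theorem posSemidef_diagonal_add_add_smul_one_sub {ι : Type*} [Finite ι] [DecidableEq ι]
    {d d' : ι → ℝ} {c : ℝ} (hd : ∀ i, d' i ≤ d i + c) (M : Matrix ι ι ℝ) :
    (Matrix.diagonal d + M + c • 1 - (Matrix.diagonal d' + M)).PosSemidef := by
  have hdiff : Matrix.diagonal d + M + c • 1 - (Matrix.diagonal d' + M) =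
      Matrix.diagonal fun i => d i + c - d' i := by
    rw [Matrix.smul_one_eq_diagonal, add_right_comm, add_sub_add_right_eq_sub,
      Matrix.diagonal_add, Matrix.diagonal_sub]
  rw [hdiff, Matrix.posSemidef_diagonal_iff]
  exact fun i => sub_nonneg.2 (hd i)

/-- The off-diagonal part of the periodic restriction: nearest-neighbour hopping on the cycle
`Fin n`. The two hops add up to a double edge for `n = 2` and degenerate to a single loop for
`n = 1`, as in `HPer`. -/
def cyclicHopping (n : ℕ) : Matrix (Fin n) (Fin n) ℝ :=
  Matrix.circulant fun d : Fin n =>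
    (if (d : ℕ) = 1 then 1 else 0) + if (d : ℕ) + 1 = n then 1 else 0

theorem cyclicHopping_apply {n : ℕ} (i j : Fin n) : cyclicHopping n i j =
    (if (i : ℕ) + 1 = j ∨ (j : ℕ) + 1 = i then 1 else 0) +
      if ((i : ℕ) = 0 ∧ (j : ℕ) = n - 1) ∨ ((i : ℕ) = n - 1 ∧ (j : ℕ) = 0) then 1 else 0 := by
  have hi := i.isLt
  have hj := j.isLt
  rw [cyclicHopping, Matrix.circulant_apply]
  rcases le_or_gt j i with hji | hij
  · rw [Fin.sub_val_of_le hji]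
    congr 2 <;> apply propext <;> omega
  · rw [Fin.coe_sub_iff_lt.2 hij, add_comm]
    congr 2 <;> apply propext <;> omega

theorem isHermitian_cyclicHopping (n : ℕ) : (cyclicHopping n).IsHermitian :=
  Matrix.IsHermitian.ext fun i j => by
    simp only [cyclicHopping_apply, star_trivial, or_comm, and_comm]

theorem HPer_eq_diagonal_add_cyclicHopping (lam : ℝ) (f : ℝ → ℝ) (T : Equiv.Perm ℝ) (x : ℝ)
    (n : ℕ) : HPer lam f T x n =
      Matrix.diagonal (fun i : Fin n => lam * f ((T ^ (i : ℕ)) x)) + cyclicHopping n := by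
  ext i j
  simp only [HPer, HDir, cyclicHopping_apply, Matrix.add_apply, Matrix.of_apply,
    Matrix.diagonal_apply, add_assoc]

section Comparison

variable {f : ℝ → ℝ} {T : Equiv.Perm ℝ} {lam : ℝ}

theorem eigenvalue_HPer_le_of_potential_le {n : ℕ} [NeZero n] {x y c : ℝ} (j : Fin n)
    (hpot : ∀ l : Fin n,
      lam * f ((T ^ (l : ℕ)) y) ≤ lam * f ((T ^ ((l + j : Fin n) : ℕ)) x) + c)
    {a b : Fin n → ℝ} (ha : Monotone a) (hb : Monotone b)
    (hxa : (HPer lam f T x n).charpoly = ∏ i, (X - Polynomial.C (a i)))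
    (hyb : (HPer lam f T y n).charpoly = ∏ i, (X - Polynomial.C (b i))) (i : Fin n) :
    b i ≤ a i + c := by
  rw [HPer_eq_diagonal_add_cyclicHopping] at hxa hyb
  rw [cyclicHopping, ← charpoly_diagonal_add_circulant_add_right _ _ j, ← cyclicHopping] at hxa
  have hherm (d : Fin n → ℝ) : (Matrix.diagonal d + cyclicHopping n).IsHermitian :=
    (Matrix.isHermitian_diagonal d).add (isHermitian_cyclicHopping n)
  exact le_add_of_posSemidef_of_charpoly_eq_prod (hherm _) (hherm _)
    (posSemidef_diagonal_add_add_smul_one_sub hpot _) ha hb hxa hyb i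

theorem apply_pow_eq_add_mul {h : ℝ → ℝ} {α : ℝ} (hT : ∀ t, h (T t) = h t + α) (m : ℕ) (t : ℝ) :
    h ((T ^ m) t) = h t + m * α := by
  induction m with
  | zero => simp
  | succ m ih =>
    rw [pow_succ', Equiv.Perm.mul_apply, hT, ih]
    push_cast
    ring

theorem eigenvalue_HPer_le_of_isCoprime {n : ℕ} [NeZero n] {h : CircleDeg1Lift} {γ C α ε : ℝ}
    {p : ℤ} (hlam : 0 ≤ lam) (hγ : 0 ≤ γ) (hC : 0 ≤ C) (hf : Function.Periodic f 1)
    (hfγ : ∀ u v, u ≤ v → f v - f u ≤ γ * (v - u)) (hT : ∀ t, h (T t) = h t + α)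
    (hh : ∀ u v, u ≤ v → v - u ≤ C * (h v - h u)) (hp : IsCoprime p n)
    (hε : |n * α - p| ≤ ε) {x y : ℝ} {a b : Fin n → ℝ} (ha : Monotone a) (hb : Monotone b)
    (hxa : (HPer lam f T x n).charpoly = ∏ i, (X - Polynomial.C (a i)))
    (hyb : (HPer lam f T y n).charpoly = ∏ i, (X - Polynomial.C (b i))) (i : Fin n) :
    b i ≤ a i + lam * γ * C * (2 * ε + 1 / n) := by
  obtain ⟨j, hj⟩ := exists_fin_forall_rotation_sub_mem_Icc hp hε (h y - h x)
  refine eigenvalue_HPer_le_of_potential_le j (fun l => ?_) ha hb hxa hyb i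
  obtain ⟨m, hm⟩ := hj l
  set u := (T ^ ((l + j : Fin n) : ℕ)) x
  set v := (T ^ (l : ℕ)) y
  have hdist : h v - (h u + m) ∈ Set.Icc 0 (2 * ε + 1 / n) := by
    rw [apply_pow_eq_add_mul hT, apply_pow_eq_add_mul hT]
    convert hm using 1
    ring
  have hfuv : f v - f u ≤ γ * C * (2 * ε + 1 / n) :=
    (sub_le_mul_of_apply_sub_apply_nonneg hγ hC hf hfγ hh hdist.1).trans (by
      gcongr
      exact hdist.2)
  linarith [mul_le_mul_of_nonneg_left hfuv hlam]

theorem abs_eigenvalue_HPer_sub_le_of_dens {n : ℕ} [NeZero n] {h : CircleDeg1Lift} {γ C α : ℝ}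
    {k : ℕ} (hn : n = (GenContFract.of α).dens k)
    (hlam : 0 ≤ lam) (hγ : 0 ≤ γ) (hC : 0 ≤ C) (hf : Function.Periodic f 1)
    (hfγ : ∀ u v, u ≤ v → f v - f u ≤ γ * (v - u)) (hT : ∀ t, h (T t) = h t + α)
    (hh : ∀ u v, u ≤ v → v - u ≤ C * (h v - h u)) {μ : ℝ → Fin n → ℝ} (hμ : ∀ z, Monotone (μ z))
    (hμT : ∀ z, (HPer lam f T z n).charpoly = ∏ i, (X - Polynomial.C (μ z i)))
    (x y : ℝ) (i : Fin n) :
    |μ x i - μ y i| ≤ lam * γ * C * (2 * (1 / (GenContFract.of α).dens (k + 1)) + 1 / n) := by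
  obtain ⟨p, q, hp, hq⟩ := exists_int_nums_eq_and_dens_eq α k
  obtain rfl : q = n := by exact_mod_cast hq.symm.trans hn.symm
  have hcoprime := isCoprime_of_nums_eq_of_dens_eq hp hq
  have hε := abs_dens_mul_sub_nums_le α k
  rw [hp, ← hn] at hε
  have hle (x y : ℝ) := eigenvalue_HPer_le_of_isCoprime hlam hγ hC hf hfγ hT hh hcoprime hε
    (hμ x) (hμ y) (hμT x) (hμT y) i
  exact abs_sub_le_iff.2 ⟨sub_le_iff_le_add'.2 (hle y x), sub_le_iff_le_add'.2 (hle x y)⟩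

end Comparison

theorem eigenvalue_global_horizontal_comparison_general
    (f : ℝ → ℝ) (T : Equiv.Perm ℝ) (ν : Measure ℝ)
    (γp Cp lam α : ℝ) (q : ℕ → ℕ) (k : ℕ) (μ : ℝ → Fin (q k) → ℝ)
    (hlam : 0 ≤ lam) (hfper : Function.Periodic f 1)
    (hfLip : ∀ u v, u ≤ v → f v - f u ≤ γp * (v - u))
    (hTmono : StrictMono T) (hTper : ∀ t, T (t + 1) = T t + 1)
    (hrot : Tendsto (fun m : ℕ => (T ^ m) 0 / (m : ℝ)) atTop (nhds α))
    (hνprob : ν (Set.Ico 0 1) = 1) (hνinv : MeasurePreserving T ν ν)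
    (hνper : MeasurePreserving (· + 1) ν ν)
    (hcomp : ∀ u v, u ≤ v → v ≤ u + 1 → v - u ≤ Cp * ν.real (Set.Icc u v))
    (hqcf : ∀ m, (q m : ℝ) = (GenContFract.of α).dens m)
    (hμmono : ∀ z, Monotone (μ z))
    (hμeig : ∀ z, (HPer lam f T z (q k)).charpoly = ∏ i, (X - Polynomial.C (μ z i)))
    (x y : ℝ) (i : Fin (q k)) :
    |μ x i - μ y i| ≤
      lam * γp * Cp / (q (k + 1) : ℝ) + 2 * (lam * γp * Cp) / (q k : ℝ) ∧
    lam * γp * Cp / (q (k + 1) : ℝ) + 2 * (lam * γp * Cp) / (q k : ℝ) ≤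
      3 * (lam * γp * Cp) / (q k : ℝ) := by
  have hγp : 0 ≤ γp := by simpa [hfper.eq] using hfLip 0 1 zero_le_one
  have hCp : 0 ≤ Cp :=
    (pos_of_mul_pos_left (by linarith [hcomp 0 1 zero_le_one (by simp)]) measureReal_nonneg).le
  let F : CircleDeg1Lift := ⟨⟨T, hTmono.monotone⟩, hTper⟩
  have hF : F.translationNumber = α :=
    F.translationNumber_eq_of_tendsto₀ (by simpa [F, Equiv.Perm.iterate_eq_pow] using hrot)
  obtain ⟨h, hhT, hhC⟩ := exists_expanding_semiconj_translation (F := F) hTmono hνinv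
    hνper hνprob hCp hcomp
  have : NeZero (q k) := ⟨i.pos.ne'⟩
  have hμxy := abs_eigenvalue_HPer_sub_le_of_dens (hqcf k) hlam hγp hCp hfper hfLip (hF ▸ hhT) hhC
    hμmono hμeig x y i
  rw [← hqcf] at hμxy
  have hqk : (0 : ℝ) < q k := by exact_mod_cast i.pos
  have hqle : (q k : ℝ) ≤ q (k + 1) := by
    rw [hqcf, hqcf]
    exact GenContFract.of_den_mono
  have hdiv : lam * γp * Cp / (q (k + 1) : ℝ) ≤ lam * γp * Cp / (q k : ℝ) := by gcongr
  rw [mul_div_assoc 2, mul_div_assoc 3]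
  constructor
  · calc |μ x i - μ y i| ≤ lam * γp * Cp * (2 * (1 / (q (k + 1) : ℝ)) + 1 / (q k : ℝ)) := hμxy
      _ = 2 * (lam * γp * Cp / (q (k + 1) : ℝ)) + lam * γp * Cp / (q k : ℝ) := by ring
      _ ≤ lam * γp * Cp / (q (k + 1) : ℝ) + 2 * (lam * γp * Cp / (q k : ℝ)) := by linarith
  · linarith

/-- For `n = q_k` and all `x, y`:
`|μ̃_i(x) − μ̃_i(y)| ≤ λγ₊C₊/q_{k+1} + 2λγ₊C₊/q_k ≤ 3λγ₊C₊/q_k`. -/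
theorem eigenvalue_global_horizontal_comparison
    (f : ℝ → ℝ) (T : Equiv.Perm ℝ) (ν : Measure ℝ)
    (γm γp Cm Cp lam α : ℝ) (q : ℕ → ℕ) (k : ℕ) (μ : ℝ → Fin (q k) → ℝ)
    (hγm : 0 < γm) (hγp : 0 < γp) (hlam : 0 < lam)
    (hfper : ∀ t : ℝ, f (t + 1) = f t) (hf0 : f 0 = 0)
    (hf1 : Filter.Tendsto f (nhdsWithin 1 (Set.Iio 1)) (nhds 1))
    (hfLip : ∀ u v : ℝ, 0 ≤ u → u < v → v < 1 →
      γm * (v - u) ≤ f v - f u ∧ f v - f u ≤ γp * (v - u))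
    (hTmono : StrictMono ⇑T) (hTper : ∀ t : ℝ, T (t + 1) = T t + 1)
    (hαirr : Irrational α)
    (hrot : Filter.Tendsto (fun m : ℕ => (T ^ m) 0 / (m : ℝ)) Filter.atTop (nhds α))
    (hCm : 0 < Cm) (hCp : 0 < Cp)
    (hνprob : ν (Set.Ico (0 : ℝ) 1) = 1)
    (hνinv : MeasureTheory.Measure.map (⇑T) ν = ν)
    (hνper : MeasureTheory.Measure.map (fun t : ℝ => t + 1) ν = ν)
    (hcomp : ∀ u v : ℝ, u ≤ v → v ≤ u + 1 →
      Cm * (ν (Set.Icc u v)).toReal ≤ v - u ∧ v - u ≤ Cp * (ν (Set.Icc u v)).toReal)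
    (hqpos : ∀ m : ℕ, 0 < q m)
    (hqcf : ∀ m : ℕ, ((q m : ℕ) : ℝ) = (GenContFract.of α).dens m)
    (hμmono : ∀ z : ℝ, Monotone (μ z))
    (hμeig : ∀ z : ℝ, (HPer lam f T z (q k)).charpoly = ∏ i, (X - Polynomial.C (μ z i)))
    (x y : ℝ) (i : Fin (q k)) :
    |μ x i - μ y i| ≤
      lam * γp * Cp / (q (k + 1) : ℝ) + 2 * (lam * γp * Cp) / (q k : ℝ) ∧
    lam * γp * Cp / (q (k + 1) : ℝ) + 2 * (lam * γp * Cp) / (q k : ℝ) ≤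
      3 * (lam * γp * Cp) / (q k : ℝ) := by
  have hfmin : ∀ t ∈ Set.Ico (0 : ℝ) 1, f 0 ≤ f t := fun t ht => by
    rcases ht.1.eq_or_lt with rfl | ht0
    · rfl
    · exact sub_nonneg.1 (le_trans (by positivity) (hfLip 0 t le_rfl ht0 ht.2).1)
  exact eigenvalue_global_horizontal_comparison_general f T ν γp Cp lam α q k μ hlam.le
    hfper (fun u v => sub_le_mul_sub_of_periodic hγp.le hfper hfmin
      fun u v hu huv hv => (hfLip u v hu huv hv).2)
    hTmono hTper hrot hνprob ⟨hTmono.monotone.measurable, hνinv⟩ ⟨by fun_prop, hνper⟩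
    (fun u v huv hvu => (hcomp u v huv hvu).2) hqcf hμmono hμeig x y i
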